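/- arXiv:1505.00283 — 5 statements merged into one kernel-verified Lean document; each statement's English description precedes it below -/
import Mathlib

section
/- Let d ≥ 2 and let v : Fin n → ZMod d be a nonzero vector. Then there exist a matrix M : Matrix (Fin n) (Fin n) (ZMod d) that is a finite product of elementary matrices (transvection matrices, i.e. identity plus a single off-diagonal scalar entry, and permutation matrices of transpositions) and a nonzero scalar a ∈ ZMod d such that the row vector v multiplied by M (Matrix.vecMul v M) equals the vector that is a in the first coordinate and 0 in all other coordinates. -/
open Matrix

/-- A matrix is elementary if it is a transvection matrix (identity plus a single
off-diagonal entry) or the permutation matrix of a transposition. -/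
def IsElementary {n : ℕ} {R : Type*} [CommRing R] (M : Matrix (Fin n) (Fin n) R) : Prop :=
  (∃ t : Matrix.TransvectionStruct (Fin n) R, M = t.toMatrix) ∨
  (∃ i j : Fin n, i ≠ j ∧ M = (Equiv.swap i j).permMatrix R)

/-!
Among the entries of the vector fix a nonzero one as pivot. If the pivot fails to divide another
entry, division with remainder turns that entry into a nonzero one that is smaller than the pivot
and becomes the new pivot; since the relation comparing remainders with divisors is well founded,
this happens only finitely often. Once the pivot divides all other entries it clears them, and a
transposition moves it into place. Zero divisors do no harm, and for `d ≠ 0` the ring `ZMod d`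
inherits division with remainder from the representatives `0, …, d - 1`.
-/

/-- A commutative ring with division with remainder, the remainder being smaller than the divisor
for some well-founded relation. This is the notion of Samuel: unlike for `EuclideanDomain`, zero
divisors are allowed. -/
def IsEuclideanRing (R : Type*) [CommRing R] : Prop :=
  ∃ r : R → R → Prop, WellFounded r ∧ ∀ a b, b ≠ 0 → ∃ q, r (a - b * q) b

theorem IsEuclideanRing.of_euclideanDomain (R : Type*) [EuclideanDomain R] :
    IsEuclideanRing R := by
  refine ⟨EuclideanDomain.r, EuclideanDomain.r_wellFounded, fun a b hb ↦ ⟨a / b, ?_⟩⟩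
  rw [← EuclideanDomain.mod_eq_sub_mul_div]
  exact EuclideanDomain.mod_lt a hb

theorem IsEuclideanRing.zmod (d : ℕ) : IsEuclideanRing (ZMod d) := by
  rcases eq_or_ne d 0 with rfl | hd
  · exact IsEuclideanRing.of_euclideanDomain ℤ
  have : NeZero d := ⟨hd⟩
  refine ⟨InvImage (· < ·) ZMod.val, InvImage.wf _ wellFounded_lt,
    fun a b hb ↦ ⟨(a.val / b.val : ℕ), ?_⟩⟩
  have remainder_eq : a - b * (a.val / b.val : ℕ) = (a.val % b.val : ℕ) := by
    rw [sub_eq_iff_eq_add]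
    calc a = ((a.val % b.val + b.val * (a.val / b.val) : ℕ) : ZMod d) := by
          rw [Nat.mod_add_div, ZMod.natCast_zmod_val]
      _ = (a.val % b.val : ℕ) + b * (a.val / b.val : ℕ) := by
          rw [Nat.cast_add, Nat.cast_mul, ZMod.natCast_zmod_val]
  have remainder_lt : a.val % b.val < b.val := Nat.mod_lt _ (ZMod.val_pos.mpr hb)
  rw [InvImage, remainder_eq, ZMod.val_natCast_of_lt (remainder_lt.trans b.val_lt)]
  exact remainder_lt

/-- The row vector `v` can be transformed into `w` by elementary column operations. -/
def ElementarilyReducesTo {n : ℕ} {R : Type*} [CommRing R] (v w : Fin n → R) : Prop :=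
  ∃ M ∈ Submonoid.closure {M : Matrix (Fin n) (Fin n) R | IsElementary M}, v ᵥ* M = w

section

variable {n : ℕ} {R : Type*} [CommRing R]

theorem vecMul_transvection {m : Type*} [Fintype m] [DecidableEq m] (v : m → R) (i j : m) (c : R) :
    v ᵥ* transvection i j c = Function.update v j (v j + c * v i) := by
  ext k
  rcases eq_or_ne k j with rfl | hk
  · rw [Function.update_self]
    exact mul_transvection_apply_same i k () c (replicateRow Unit v)
  · rw [Function.update_of_ne hk]
    exact mul_transvection_apply_of_ne i j () k hk c (replicateRow Unit v)

namespace ElementarilyReducesTo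

theorem refl (v : Fin n → R) : ElementarilyReducesTo v v :=
  ⟨1, one_mem _, vecMul_one v⟩

theorem trans {u v w : Fin n → R} :
    ElementarilyReducesTo u v → ElementarilyReducesTo v w → ElementarilyReducesTo u w := by
  rintro ⟨M, hM, rfl⟩ ⟨N, hN, rfl⟩
  exact ⟨M * N, mul_mem hM hN, (vecMul_vecMul u M N).symm⟩

theorem vecMul_of_isElementary (v : Fin n → R) {M : Matrix (Fin n) (Fin n) R}
    (hM : IsElementary M) : ElementarilyReducesTo v (v ᵥ* M) :=
  ⟨M, Submonoid.subset_closure hM, rfl⟩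

theorem update_add_mul (v : Fin n → R) {i j : Fin n} (hij : i ≠ j) (c : R) :
    ElementarilyReducesTo v (Function.update v j (v j + c * v i)) := by
  rw [← vecMul_transvection]
  exact vecMul_of_isElementary v (.inl ⟨⟨i, j, hij, c⟩, rfl⟩)

theorem comp_swap (v : Fin n → R) (i j : Fin n) :
    ElementarilyReducesTo v (v ∘ Equiv.swap i j) := by
  rcases eq_or_ne i j with rfl | hij
  · simpa using refl v
  · rw [← Equiv.symm_swap i j, ← vecMul_permMatrix]
    exact vecMul_of_isElementary v (.inr ⟨i, j, hij, rfl⟩)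

theorem single_single (i j : Fin n) (a : R) :
    ElementarilyReducesTo (Pi.single i a) (Pi.single j a) := by
  simpa only [Pi.single_comp_equiv, Equiv.symm_swap, Equiv.swap_apply_left] using
    comp_swap (Pi.single i a) i j

theorem piecewise_zero_of_dvd (v : Fin n → R) (i : Fin n) (s : Finset (Fin n)) (hi : i ∉ s)
    (hdvd : ∀ j ∈ s, v i ∣ v j) : ElementarilyReducesTo v (s.piecewise 0 v) := by
  induction s using Finset.induction_on with
  | empty => simpa using refl v
  | insert j s hj ih =>
    rw [Finset.mem_insert, not_or] at hi
    rw [Finset.forall_mem_insert] at hdvd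
    obtain ⟨⟨q, hq⟩, hs⟩ := hdvd
    have cleared : s.piecewise 0 v j + -q * s.piecewise 0 v i = 0 := by
      rw [Finset.piecewise_eq_of_notMem _ _ _ hj, Finset.piecewise_eq_of_notMem _ _ _ hi.2, hq]
      ring
    rw [Finset.piecewise_insert, Pi.zero_apply, ← cleared]
    exact (ih hi.2 hs).trans (update_add_mul _ hi.1 (-q))

theorem single_of_dvd (v : Fin n → R) (i : Fin n) (hdvd : ∀ j, v i ∣ v j) :
    ElementarilyReducesTo v (Pi.single i (v i)) := by
  have h := piecewise_zero_of_dvd v i {i}ᶜ (by simp) fun j _ ↦ hdvd j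
  rwa [Finset.piecewise_compl, Finset.piecewise_singleton] at h

theorem exists_list {v w : Fin n → R} (h : ElementarilyReducesTo v w) :
    ∃ L : List (Matrix (Fin n) (Fin n) R), (∀ M ∈ L, IsElementary M) ∧ v ᵥ* L.prod = w := by
  obtain ⟨M, hM, hvM⟩ := h
  obtain ⟨L, hL, rfl⟩ := Submonoid.exists_list_of_mem_closure hM
  exact ⟨L, hL, hvM⟩

end ElementarilyReducesTo

theorem IsEuclideanRing.exists_elementarilyReducesTo_single (hR : IsEuclideanRing R)
    {v : Fin n → R} {i : Fin n} (hi : v i ≠ 0) (k : Fin n) :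
    ∃ a ≠ 0, ElementarilyReducesTo v (Pi.single k a) := by
  obtain ⟨r, hr, hdiv⟩ := hR
  induction hp : v i using hr.induction generalizing v i with
  | _ p ih =>
    subst hp
    by_cases hdvd : ∀ j, v i ∣ v j
    · exact ⟨v i, hi, (ElementarilyReducesTo.single_of_dvd v i hdvd).trans (.single_single i k _)⟩
    · push Not at hdvd
      obtain ⟨j, hj⟩ := hdvd
      have hij : i ≠ j := fun hij ↦ hj (hij ▸ dvd_rfl)
      obtain ⟨q, hq⟩ := hdiv (v j) (v i) hi
      let w := Function.update v j (v j + -q * v i)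
      have hwj : w j = v j - v i * q := by simp only [w, Function.update_self]; ring
      have hwj_ne : w j ≠ 0 := fun h ↦ hj ⟨q, sub_eq_zero.mp (hwj ▸ h)⟩
      obtain ⟨a, ha, hwa⟩ := ih (w j) (hwj ▸ hq) hwj_ne rfl
      exact ⟨a, ha, (ElementarilyReducesTo.update_add_mul v hij (-q)).trans hwa⟩

end

theorem vec_elementary_reduction_general {n : ℕ} {R : Type*} [CommRing R]
    (hR : IsEuclideanRing R) (v : Fin n → R) (hv : v ≠ 0) :
    ∃ (L : List (Matrix (Fin n) (Fin n) R)),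
      (∀ M ∈ L, IsElementary M) ∧
      ∃ a : R, a ≠ 0 ∧ v ᵥ* L.prod = fun i : Fin n => if (i : ℕ) = 0 then a else 0 := by
  obtain ⟨i, hi⟩ := Function.ne_iff.mp hv
  obtain ⟨a, ha, hva⟩ := hR.exists_elementarilyReducesTo_single hi ⟨0, i.pos⟩
  obtain ⟨L, hL, hvL⟩ := hva.exists_list
  refine ⟨L, hL, a, ha, hvL.trans ?_⟩
  ext k
  simp only [Pi.single_apply, Fin.ext_iff]

theorem vec_elementary_reduction (d n : ℕ) (hd : 2 ≤ d)
    (v : Fin n → ZMod d) (hv : v ≠ 0) :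
    ∃ (L : List (Matrix (Fin n) (Fin n) (ZMod d))),
      (∀ M ∈ L, IsElementary M) ∧
      ∃ a : ZMod d, a ≠ 0 ∧
        Matrix.vecMul v L.prod = fun i : Fin n => if (i : ℕ) = 0 then a else 0 :=
  vec_elementary_reduction_general (IsEuclideanRing.zmod d) v hv
end

section
/- Let d ≥ 2 and let T : Matrix (Fin m) (Fin k) (ZMod d). Then the cardinality of the ZMod d-submodule of (Fin k → ZMod d) spanned by the rows of T equals the cardinality of the image of T as a linear map, i.e. Nat.card (Submodule.span (ZMod d) (set of rows of T)) = Nat.card (LinearMap.range T.mulVecLin). -/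
/-!
Let `ψ` be a primitive additive character of a commutative ring `R`, with values in an integral
domain. Composing with `ψ` turns distinct `R`-linear functionals on a finite module `N` into
distinct additive characters of `N`, and characters are linearly independent, so `N` has at most
`|N|` functionals. For a bilinear form `B` on `M × N`, evaluation embeds the image of `M → Dual N`
in the dual of the image of `N → Dual M`, so the first image is at most as large as the second;
exchanging the two variables gives equality. Apply this to `B x y = x ⬝ᵥ T *ᵥ y` and the character
`j ↦ exp (2πij / d)` of `ZMod d`.
-/

open Function LinearMap

section PrimitiveCharacter

variable {R K N : Type*} [CommRing R] [AddCommMonoid N] [Module R N]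

theorem compAddMonoidHom_dual_injective_of_isPrimitive [CommMonoid K] {ψ : AddChar R K}
    (hψ : ψ.IsPrimitive) :
    Injective fun f : Module.Dual R N ↦ ψ.compAddMonoidHom f.toAddMonoidHom := by
  intro f g hfg
  ext x
  by_contra hne
  refine hψ (sub_ne_zero.mpr hne) ?_
  ext r
  have hr : ψ (f (r • x)) = ψ (g (r • x)) := DFunLike.congr_fun hfg (r • x)
  calc ψ ((f x - g x) * r) = ψ (f (r • x) - g (r • x)) := by
        rw [map_smul, map_smul, smul_eq_mul, smul_eq_mul, ← mul_sub, mul_comm]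
    _ = ψ (g (r • x) - g (r • x)) := by
        rw [sub_eq_add_neg, sub_eq_add_neg, AddChar.map_add_eq_mul, hr, ← AddChar.map_add_eq_mul]
    _ = 1 := by rw [sub_self, AddChar.map_zero_eq_one]

variable [CommRing K] [IsDomain K] {ψ : AddChar R K}

theorem linearIndependent_comp_dual_of_isPrimitive (hψ : ψ.IsPrimitive) :
    LinearIndependent K fun (f : Module.Dual R N) (x : N) ↦ ψ (f x) :=
  (linearIndependent_monoidHom (Multiplicative N) K).comp _
    (AddChar.toMonoidHomEquiv.injective.comp (compAddMonoidHom_dual_injective_of_isPrimitive hψ))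

theorem finite_dual_of_isPrimitive [Finite N] (hψ : ψ.IsPrimitive) :
    Finite (Module.Dual R N) :=
  (linearIndependent_comp_dual_of_isPrimitive hψ).finite

theorem card_dual_le_of_isPrimitive [Finite N] (hψ : ψ.IsPrimitive) :
    Nat.card (Module.Dual R N) ≤ Nat.card N := by
  have := Fintype.ofFinite N
  have := finite_dual_of_isPrimitive (N := N) hψ
  have := Fintype.ofFinite (Module.Dual R N)
  simpa only [Nat.card_eq_fintype_card, Module.finrank_fintype_fun_eq_card] using
    (linearIndependent_comp_dual_of_isPrimitive (N := N) hψ).fintype_card_le_finrank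

end PrimitiveCharacter

section BilinearForm

variable {R M N : Type*} [CommRing R] [AddCommGroup M] [Module R M] [AddCommGroup N] [Module R N]

theorem ker_dualRestrict_range_flip_comp_eval (B : M →ₗ[R] N →ₗ[R] R) :
    ker (B.flip.range.dualRestrict ∘ₗ Module.Dual.eval R M) = ker B := by
  ext x
  simp only [mem_ker]
  constructor
  · intro hx
    ext y
    exact DFunLike.congr_fun hx (B.flip.rangeRestrict y)
  · intro hx
    ext ⟨_, y, rfl⟩
    exact DFunLike.congr_fun hx y

theorem exists_injective_range_to_dual_range_flip (B : M →ₗ[R] N →ₗ[R] R) :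
    ∃ E : range B →ₗ[R] Module.Dual R (range B.flip), Injective E := by
  let C := B.flip.range.dualRestrict ∘ₗ Module.Dual.eval R M
  let e : range B ≃ₗ[R] range C := B.quotKerEquivRange.symm ≪≫ₗ
    Submodule.quotEquivOfEq _ _ (ker_dualRestrict_range_flip_comp_eval B).symm ≪≫ₗ
    C.quotKerEquivRange
  exact ⟨(range C).subtype ∘ₗ e, (range C).injective_subtype.comp e.injective⟩

variable {K : Type*} [CommRing K] [IsDomain K] {ψ : AddChar R K}

theorem finite_range_of_isPrimitive_of_finite_range_flip (hψ : ψ.IsPrimitive)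
    (B : M →ₗ[R] N →ₗ[R] R) [Finite (range B.flip)] : Finite (range B) :=
  have ⟨_, hE⟩ := exists_injective_range_to_dual_range_flip B
  have := finite_dual_of_isPrimitive (N := range B.flip) hψ
  .of_injective _ hE

theorem card_range_le_card_range_flip_of_isPrimitive (hψ : ψ.IsPrimitive) (B : M →ₗ[R] N →ₗ[R] R)
    [Finite (range B.flip)] : Nat.card (range B) ≤ Nat.card (range B.flip) := by
  obtain ⟨E, hE⟩ := exists_injective_range_to_dual_range_flip B
  have := finite_dual_of_isPrimitive (N := range B.flip) hψ
  calc Nat.card (range B) ≤ Nat.card (Module.Dual R (range B.flip)) :=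
        Nat.card_le_card_of_injective E hE
    _ ≤ Nat.card (range B.flip) := card_dual_le_of_isPrimitive (N := range B.flip) hψ

theorem card_range_eq_card_range_flip_of_isPrimitive (hψ : ψ.IsPrimitive) (B : M →ₗ[R] N →ₗ[R] R)
    [Finite (range B.flip)] : Nat.card (range B) = Nat.card (range B.flip) :=
  have : Finite (range B.flip.flip) := finite_range_of_isPrimitive_of_finite_range_flip hψ B
  (card_range_le_card_range_flip_of_isPrimitive hψ B).antisymm
    (card_range_le_card_range_flip_of_isPrimitive hψ B.flip)

end BilinearForm

section Matrix

variable {R m k : Type*} [CommRing R] [Fintype k]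

theorem flip_dotProductEquiv_comp_vecMulLinear [Fintype m] [DecidableEq m] [DecidableEq k]
    (T : Matrix m k R) :
    ((dotProductEquiv R k).toLinearMap ∘ₗ T.vecMulLinear).flip =
      (dotProductEquiv R m).toLinearMap ∘ₗ T.mulVecLin := by
  ext y x
  simp

theorem card_row_module_eq_card_range_general [Finite m] {K : Type*} [CommRing K] [IsDomain K]
    {ψ : AddChar R K} (hψ : ψ.IsPrimitive) (T : Matrix m k R) [Finite (range T.mulVecLin)] :
    Nat.card (Submodule.span R (Set.range T.row)) = Nat.card (range T.mulVecLin) := by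
  classical
  have := Fintype.ofFinite m
  let B := (dotProductEquiv R k).toLinearMap ∘ₗ T.vecMulLinear
  let rowEquiv : range T.vecMulLinear ≃ₗ[R] range B :=
    (dotProductEquiv R k).submoduleMap _ ≪≫ₗ .ofEq _ _ (range_comp _ _).symm
  let colEquiv : range T.mulVecLin ≃ₗ[R] range B.flip :=
    (dotProductEquiv R m).submoduleMap _ ≪≫ₗ
      .ofEq _ _ (by rw [flip_dotProductEquiv_comp_vecMulLinear, range_comp])
  have : Finite (range B.flip) := .of_equiv _ colEquiv.toEquiv
  calc Nat.card (Submodule.span R (Set.range T.row)) = Nat.card (range T.vecMulLinear) := by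
        rw [range_vecMulLinear]
    _ = Nat.card (range B) := Nat.card_congr rowEquiv.toEquiv
    _ = Nat.card (range B.flip) := card_range_eq_card_range_flip_of_isPrimitive hψ B
    _ = Nat.card (range T.mulVecLin) := (Nat.card_congr colEquiv.toEquiv).symm

end Matrix

theorem card_row_module_eq_card_range (d m k : ℕ) (hd : 2 ≤ d)
    (T : Matrix (Fin m) (Fin k) (ZMod d)) :
    Nat.card (Submodule.span (ZMod d) (Set.range fun i : Fin m => T i)) =
      Nat.card (LinearMap.range T.mulVecLin) := by
  have : NeZero d := ⟨by lia⟩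
  exact card_row_module_eq_card_range_general (ZMod.isPrimitive_stdAddChar d) T
end

section
/- Let S be an abelian subgroup of the Pauli group G_d^n with no nontrivial scalars. Then Nat.card S ≤ d^n. -/
open Matrix

noncomputable def q (d : ℕ) : ℂ := Complex.exp (2 * Real.pi * Complex.I / d)

/-- Dot product of two vectors over `ZMod d`. -/
def dotp {n d : ℕ} (A B : Fin n → ZMod d) : ZMod d := ∑ i, A i * B i

/-- The Pauli word `W(U,V)` with entries `q^{⟨U,J⟩}` at `(J, K)` when `J = K + V`. -/
noncomputable def PauliWord (d n : ℕ) (U V : Fin n → ZMod d) :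
    Matrix (Fin n → ZMod d) (Fin n → ZMod d) ℂ :=
  Matrix.of fun J K => if J = K + V then q d ^ (dotp U J).val else 0

/-- The n-qudit Pauli group, as a set of matrices. -/
noncomputable def PauliSet (d n : ℕ) : Set (Matrix (Fin n → ZMod d) (Fin n → ZMod d) ℂ) :=
  {g | ∃ (k : ZMod d) (U V : Fin n → ZMod d), g = q d ^ k.val • PauliWord d n U V}

/-!
A Pauli word other than the identity has trace zero, so in the absence of nontrivial scalars every
element of `S` other than `1` is traceless. A matrix group with this property is linearly
independent, since `A ↦ tr (g⁻¹ A)` vanishes on all its elements except `g`, and hence is finite.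
The average of its elements is then a projection, whose rank equals its trace, the size of the
matrices divided by the order of the group; so that order divides `d ^ n`.
-/

section Representation

variable {k G V : Type*} [Field k] [CharZero k] [Group G] [AddCommGroup V] [Module k V]
  [FiniteDimensional k V] [Nontrivial V] {ρ : Representation k G V}

theorem linearIndependent_of_char_eq_zero (hρ : ∀ g, g ≠ 1 → ρ.character g = 0) :
    LinearIndependent k ρ := by
  have hdim : (Module.finrank k V : k) ≠ 0 := Nat.cast_ne_zero.2 Module.finrank_pos.ne'
  let φ (g : G) : Module.Dual k (V →ₗ[k] V) :=
    (Module.finrank k V : k)⁻¹ • LinearMap.trace k V ∘ₗ LinearMap.mulLeft k (ρ g⁻¹)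
  have hφ (g h : G) : φ g (ρ h) = (Module.finrank k V : k)⁻¹ * ρ.character (g⁻¹ * h) := by
    simp [φ, Representation.character]
  refine .of_pairwise_dual_eq_zero_one _ φ (fun g h hgh => ?_) fun g => ?_
  · change φ g (ρ h) = 0
    rw [hφ, hρ _ (inv_mul_eq_one.not.2 hgh), mul_zero]
  · rw [hφ, inv_mul_cancel, Representation.char_one, inv_mul_cancel₀ hdim]

theorem card_mul_finrank_invariants_of_char_eq_zero (hρ : ∀ g, g ≠ 1 → ρ.character g = 0) :
    Nat.card G * Module.finrank k ρ.invariants = Module.finrank k V := by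
  have : Finite G := (linearIndependent_of_char_eq_zero hρ).finite
  have := Fintype.ofFinite G
  have hcard : (Nat.card G : k) ≠ 0 := Nat.cast_ne_zero.2 Nat.card_pos.ne'
  have := invertibleOfNonzero hcard
  have havg := ρ.card_inv_mul_sum_char_eq_finrank
  rw [Fintype.sum_eq_single 1 hρ, Representation.char_one, inv_mul_eq_iff_eq_mul₀ hcard] at havg
  exact_mod_cast havg.symm

end Representation

theorem card_dvd_of_trace_eq_zero {k m : Type*} [Field k] [CharZero k] [Fintype m] [DecidableEq m]
    [Nonempty m] (G : Subgroup (Matrix m m k)ˣ)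
    (hG : ∀ g ∈ G, g ≠ 1 → (g : Matrix m m k).trace = 0) :
    Nat.card G ∣ Fintype.card m := by
  let ρ : Representation k G (m → k) :=
    (Matrix.toLinAlgEquiv' : Matrix m m k ≃ₐ[k] _).toMonoidHom.comp
      ((Units.coeHom _).comp G.subtype)
  have hρ (g : G) (hg : g ≠ 1) : ρ.character g = 0 :=
    (Matrix.trace_toLin'_eq _).trans (hG g g.2 (by simpa using hg))
  rw [← Module.finrank_fintype_fun_eq_card k]
  exact Dvd.intro _ (card_mul_finrank_invariants_of_char_eq_zero hρ)

theorem exists_subgroup_units_image_val_eq {M : Type*} [Monoid M] {S : Set M} (one_mem : 1 ∈ S)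
    (mul_mem : ∀ a ∈ S, ∀ b ∈ S, a * b ∈ S) (exists_inv : ∀ a ∈ S, ∃ b ∈ S, a * b = 1) :
    ∃ G : Subgroup Mˣ, Units.val '' (G : Set Mˣ) = S := by
  let G : Subgroup Mˣ :=
    { carrier := Units.val ⁻¹' S
      one_mem' := one_mem
      mul_mem' := fun ha hb => mul_mem _ ha _ hb
      inv_mem' := fun {u} hu => by
        obtain ⟨b, hb, hub⟩ := exists_inv u hu
        rwa [Set.mem_preimage, Units.inv_eq_of_mul_eq_one_right hub] }
  refine ⟨G, Set.image_preimage_eq_of_subset fun a ha => ?_⟩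
  obtain ⟨b, hb, hab⟩ := exists_inv a ha
  obtain ⟨c, -, hbc⟩ := exists_inv b hb
  exact ⟨⟨a, b, hab, left_inv_eq_right_inv hab hbc ▸ hbc⟩, rfl⟩

theorem sum_addChar_dotProduct_eq_zero {R R' ι : Type*} [CommRing R] [Fintype R] [CommRing R']
    [IsDomain R'] [Fintype ι] [DecidableEq ι] {ψ : AddChar R R'} (hψ : ψ.IsPrimitive)
    {u : ι → R} (hu : u ≠ 0) : ∑ x, ψ (u ⬝ᵥ x) = 0 := by
  obtain ⟨i, hi⟩ := Function.ne_iff.1 hu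
  obtain ⟨r, hr⟩ := AddChar.ne_one_iff.1 (hψ hi)
  let χ : AddChar (ι → R) R' := ψ.compAddMonoidHom (dotProductBilin R R u).toAddMonoidHom
  refine AddChar.sum_eq_zero_of_ne_one (ψ := χ) (AddChar.ne_one_iff.2 ⟨Pi.single i r, ?_⟩)
  simpa [χ] using hr

section Pauli

variable {d n : ℕ} {U V : Fin n → ZMod d}

theorem dotp_eq_dotProduct : dotp U V = U ⬝ᵥ V := rfl

theorem pauliWord_zero_zero : PauliWord d n 0 0 = 1 := by
  ext J K
  simp [PauliWord, dotp_eq_dotProduct, Matrix.one_apply]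

variable [NeZero d]

theorem q_pow_val (a : ZMod d) : q d ^ a.val = ZMod.stdAddChar a := by
  rw [q, ← Complex.exp_nat_mul, ZMod.stdAddChar_apply, ZMod.toCircle_apply]
  ring_nf

theorem trace_pauliWord_of_left_ne_zero (hU : U ≠ 0) : (PauliWord d n U 0).trace = 0 := by
  simpa [Matrix.trace, PauliWord, q_pow_val, dotp_eq_dotProduct] using
    sum_addChar_dotProduct_eq_zero (ZMod.isPrimitive_stdAddChar d) hU

theorem trace_pauliWord_of_right_ne_zero (hV : V ≠ 0) : (PauliWord d n U V).trace = 0 := by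
  simp [Matrix.trace, PauliWord, hV]

theorem trace_pauliWord_of_ne_one (h : PauliWord d n U V ≠ 1) : (PauliWord d n U V).trace = 0 := by
  rcases ne_or_eq V 0 with hV | rfl
  · exact trace_pauliWord_of_right_ne_zero hV
  · refine trace_pauliWord_of_left_ne_zero ?_
    rintro rfl
    exact h pauliWord_zero_zero

end Pauli

-- For even `d`, arbitrary phases `c` also admit the `2d`-th roots of unity, as in `Y = iXZ`.
theorem card_abelian_pauli_subgroup_le_general (d n : ℕ) [NeZero d]
    (S : Set (Matrix (Fin n → ZMod d) (Fin n → ZMod d) ℂ))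
    (hSsub : ∀ a ∈ S, ∃ (c : ℂ) (U V : Fin n → ZMod d), a = c • PauliWord d n U V)
    (hS1 : (1 : Matrix (Fin n → ZMod d) (Fin n → ZMod d) ℂ) ∈ S)
    (hSmul : ∀ a ∈ S, ∀ b ∈ S, a * b ∈ S)
    (hSinv : ∀ a ∈ S, ∃ b ∈ S, a * b = 1)
    (hSscal : ∀ c : ℂ, c • (1 : Matrix (Fin n → ZMod d) (Fin n → ZMod d) ℂ) ∈ S →
      c • (1 : Matrix (Fin n → ZMod d) (Fin n → ZMod d) ℂ) = 1) :
    Nat.card S ∣ d ^ n := by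
  obtain ⟨G, rfl⟩ := exists_subgroup_units_image_val_eq hS1 hSmul hSinv
  have htrace : ∀ g ∈ G, g ≠ 1 → (g : Matrix (Fin n → ZMod d) (Fin n → ZMod d) ℂ).trace = 0 := by
    intro g hg hg1
    have hgS := Set.mem_image_of_mem Units.val hg
    obtain ⟨c, U, V, hgW⟩ := hSsub g hgS
    have hW : PauliWord d n U V ≠ 1 := by
      intro hW
      rw [hW] at hgW
      exact hg1 (Units.ext (hgW.trans (hSscal c (hgW ▸ hgS))))
    rw [hgW, Matrix.trace_smul, trace_pauliWord_of_ne_one hW, smul_zero]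
  rw [Nat.card_image_of_injective Units.val_injective]
  simpa [ZMod.card] using card_dvd_of_trace_eq_zero G htrace

theorem card_abelian_pauli_subgroup_le (d n : ℕ) [NeZero d] (hd : 2 ≤ d) (hn : 1 ≤ n)
    (S : Set (Matrix (Fin n → ZMod d) (Fin n → ZMod d) ℂ))
    (hSsub : S ⊆ PauliSet d n)
    (hS1 : (1 : Matrix (Fin n → ZMod d) (Fin n → ZMod d) ℂ) ∈ S)
    (hSmul : ∀ a ∈ S, ∀ b ∈ S, a * b ∈ S)
    (hSinv : ∀ a ∈ S, ∃ b ∈ S, a * b = 1)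
    (hScomm : ∀ a ∈ S, ∀ b ∈ S, a * b = b * a)
    (hSscal : ∀ c : ℂ, c • (1 : Matrix (Fin n → ZMod d) (Fin n → ZMod d) ℂ) ∈ S →
      c • (1 : Matrix (Fin n → ZMod d) (Fin n → ZMod d) ℂ) = 1) :
    Nat.card S ≤ d ^ n :=
  Nat.le_of_dvd (pow_pos (NeZero.pos d) n) <| card_abelian_pauli_subgroup_le_general d n S
    (fun _ ha => let ⟨k, U, V, h⟩ := hSsub ha; ⟨q d ^ k.val, U, V, h⟩) hS1 hSmul hSinv hSscal
end

section
/- Let S be an abelian subgroup of the Pauli group G_d^n with no nontrivial scalars. Then the restriction of R to S is injective, its image R(S) ⊆ (Fin n → ZMod d) × (Fin n → ZMod d) is a ZMod d-submodule, and Nat.card S = Nat.card R(S). -/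
open Matrix

/-!
Multiplying two Pauli words adds their labels `(U, V)` up to a power of `q`, so `R` turns products
in the Pauli group into sums, and an element with label `(0, 0)` is a scalar matrix. On a subgroup
without nontrivial scalars `R` therefore has trivial kernel, hence is injective. Its image is an
additive subgroup of a `ZMod d`-module, and such a subgroup is automatically a submodule.
-/

section MapMul

variable {M A : Type*} [Monoid M] [AddGroup A] {f : M → A} {S : Submonoid M}

theorem map_one_eq_zero_of_map_mul_eq_add (hf : ∀ a ∈ S, ∀ b ∈ S, f (a * b) = f a + f b) :
    f 1 = 0 := by
  simpa using hf 1 S.one_mem 1 S.one_mem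

theorem injOn_of_map_mul_eq_add (hf : ∀ a ∈ S, ∀ b ∈ S, f (a * b) = f a + f b)
    (hinv : ∀ a ∈ S, ∃ b ∈ S, a * b = 1) (hker : ∀ a ∈ S, f a = 0 → a = 1) :
    Set.InjOn f S := by
  intro a ha b hb hab
  obtain ⟨c, hc, hbc⟩ := hinv b hb
  obtain ⟨e, -, hce⟩ := hinv c hc
  have hac : a * c = 1 := hker _ (S.mul_mem ha hc) <| by
    rw [hf a ha c hc, hab, ← hf b hb c hc, hbc, map_one_eq_zero_of_map_mul_eq_add hf]
  exact (left_inv_eq_right_inv hac hce).trans (left_inv_eq_right_inv hbc hce).symm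

/-- The image, as an additive subgroup, of a group under a homomorphism to an additive group. The
group is encoded as a submonoid `S` in which every element has a right inverse, and the
homomorphism as a function on the ambient monoid that takes products in `S` to sums. -/
def imageAddSubgroup (hf : ∀ a ∈ S, ∀ b ∈ S, f (a * b) = f a + f b)
    (hinv : ∀ a ∈ S, ∃ b ∈ S, a * b = 1) : AddSubgroup A where
  carrier := f '' S
  zero_mem' := ⟨1, S.one_mem, map_one_eq_zero_of_map_mul_eq_add hf⟩
  add_mem' := by
    rintro _ _ ⟨a, ha, rfl⟩ ⟨b, hb, rfl⟩
    exact ⟨a * b, S.mul_mem ha hb, hf a ha b hb⟩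
  neg_mem' := by
    rintro _ ⟨a, ha, rfl⟩
    obtain ⟨b, hb, hab⟩ := hinv a ha
    refine ⟨b, hb, eq_neg_of_add_eq_zero_right ?_⟩
    rw [← hf a ha b hb, hab, map_one_eq_zero_of_map_mul_eq_add hf]

end MapMul

theorem q_pow_self (d : ℕ) [NeZero d] : q d ^ d = 1 :=
  (Complex.isPrimitiveRoot_exp d (NeZero.ne d)).pow_eq_one

theorem q_pow_val_add {d : ℕ} [NeZero d] (a b : ZMod d) :
    q d ^ (a + b).val = q d ^ a.val * q d ^ b.val :=
  (AddChar.zmodChar d (q_pow_self d)).map_add_eq_mul a b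

theorem dotp_eq_dotProduct_s12 {n d : ℕ} (A B : Fin n → ZMod d) : dotp A B = A ⬝ᵥ B := rfl

theorem PauliWord_zero_zero (d n : ℕ) : PauliWord d n 0 0 = 1 := by
  ext J K
  simp [PauliWord, Matrix.one_apply, dotp_eq_dotProduct_s12]

theorem PauliWord_mul_PauliWord {d n : ℕ} [NeZero d] (U V U' V' : Fin n → ZMod d) :
    PauliWord d n U V * PauliWord d n U' V' =
      q d ^ (-dotp U' V).val • PauliWord d n (U + U') (V + V') := by
  ext J K
  have hphase : dotp U J + dotp U' (J - V) = -dotp U' V + dotp (U + U') J := by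
    simp only [dotp_eq_dotProduct_s12, dotProduct_sub, add_dotProduct]
    abel
  have hshift : J - V = K + V' ↔ J = K + (V + V') := by
    rw [sub_eq_iff_eq_add, add_assoc, add_comm V']
  calc (PauliWord d n U V * PauliWord d n U' V') J K
      = ∑ L, if J - V = L then
          q d ^ (dotp U J).val * PauliWord d n U' V' L K else 0 := by
        simp only [Matrix.mul_apply, PauliWord, Matrix.of_apply, sub_eq_iff_eq_add, ite_mul,
          zero_mul]
    _ = q d ^ (dotp U J).val * PauliWord d n U' V' (J - V) K := by
        simp only [Finset.sum_ite_eq, Finset.mem_univ, if_true]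
    _ = (q d ^ (-dotp U' V).val • PauliWord d n (U + U') (V + V')) J K := by
        simp only [PauliWord, Matrix.smul_apply, Matrix.of_apply, smul_eq_mul, mul_ite, mul_zero,
          hshift, ← q_pow_val_add, hphase]

/-- `R` is a label map: it sends `q ^ k • W(U, V)` to `(U, V)`. Its values outside the Pauli group
are left arbitrary. -/
def IsPauliLabel {d n : ℕ}
    (R : Matrix (Fin n → ZMod d) (Fin n → ZMod d) ℂ → (Fin n → ZMod d) × (Fin n → ZMod d)) :
    Prop :=
  ∀ (k : ZMod d) (U V : Fin n → ZMod d), R (q d ^ k.val • PauliWord d n U V) = (U, V)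

namespace IsPauliLabel

variable {d n : ℕ} {a b : Matrix (Fin n → ZMod d) (Fin n → ZMod d) ℂ}
  {R : Matrix (Fin n → ZMod d) (Fin n → ZMod d) ℂ → (Fin n → ZMod d) × (Fin n → ZMod d)}

theorem map_mul [NeZero d] (hR : IsPauliLabel R) (ha : a ∈ PauliSet d n) (hb : b ∈ PauliSet d n) :
    R (a * b) = R a + R b := by
  obtain ⟨k, U, V, rfl⟩ := ha
  obtain ⟨l, U', V', rfl⟩ := hb
  rw [smul_mul_smul_comm, PauliWord_mul_PauliWord, smul_smul, ← q_pow_val_add, ← q_pow_val_add,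
    hR, hR, hR, Prod.mk_add_mk]

theorem exists_eq_smul_one (hR : IsPauliLabel R) (ha : a ∈ PauliSet d n) (h : R a = 0) :
    ∃ c : ℂ, a = c • 1 := by
  obtain ⟨k, U, V, rfl⟩ := ha
  obtain ⟨rfl, rfl⟩ := Prod.mk.inj ((hR k U V).symm.trans h)
  exact ⟨q d ^ k.val, by rw [← PauliWord_zero_zero]⟩

end IsPauliLabel

theorem R_injOn_image_submodule (d n : ℕ) [NeZero d] (hd : 2 ≤ d) (hn : 1 ≤ n)
    (Rmap : Matrix (Fin n → ZMod d) (Fin n → ZMod d) ℂ →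
      (Fin n → ZMod d) × (Fin n → ZMod d))
    (hR : ∀ (k : ZMod d) (U V : Fin n → ZMod d),
      Rmap (q d ^ k.val • PauliWord d n U V) = (U, V))
    (S : Set (Matrix (Fin n → ZMod d) (Fin n → ZMod d) ℂ))
    (hSsub : S ⊆ PauliSet d n)
    (hS1 : (1 : Matrix (Fin n → ZMod d) (Fin n → ZMod d) ℂ) ∈ S)
    (hSmul : ∀ a ∈ S, ∀ b ∈ S, a * b ∈ S)
    (hSinv : ∀ a ∈ S, ∃ b ∈ S, a * b = 1)
    (hScomm : ∀ a ∈ S, ∀ b ∈ S, a * b = b * a)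
    (hSscal : ∀ c : ℂ, c • (1 : Matrix (Fin n → ZMod d) (Fin n → ZMod d) ℂ) ∈ S →
      c • (1 : Matrix (Fin n → ZMod d) (Fin n → ZMod d) ℂ) = 1)
    :
    Set.InjOn Rmap S ∧
    (∃ N : Submodule (ZMod d) ((Fin n → ZMod d) × (Fin n → ZMod d)),
      (N : Set ((Fin n → ZMod d) × (Fin n → ZMod d))) = Rmap '' S) ∧
    Nat.card S = Nat.card (Rmap '' S) := by
  let T : Submonoid (Matrix (Fin n → ZMod d) (Fin n → ZMod d) ℂ) :=
    { carrier := S, one_mem' := hS1, mul_mem' := fun ha hb => hSmul _ ha _ hb }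
  have hmul : ∀ a ∈ T, ∀ b ∈ T, Rmap (a * b) = Rmap a + Rmap b := fun a ha b hb =>
    IsPauliLabel.map_mul hR (hSsub ha) (hSsub hb)
  have hker : ∀ a ∈ T, Rmap a = 0 → a = 1 := by
    intro a ha ha0
    obtain ⟨c, rfl⟩ := IsPauliLabel.exists_eq_smul_one hR (hSsub ha) ha0
    exact hSscal c ha
  have hinj : Set.InjOn Rmap S := injOn_of_map_mul_eq_add (S := T) hmul hSinv hker
  exact ⟨hinj, ⟨AddSubgroup.toZModSubmodule d (imageAddSubgroup hmul hSinv), rfl⟩,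
    (Nat.card_image_of_injOn hinj).symm⟩
end

section
/- Let S be an abelian subgroup of the Pauli group G_d^n with no nontrivial scalars and Nat.card S = d^n, let ψ be a nonzero vector in Fix(S), and let w_1, …, w_K ∈ G_d^n with w_1 = 1 be such that the vectors w_i.mulVec ψ are linearly independent over ℂ; let Q be their ℂ-span. Let A be the ZMod d-submodule of (Fin n → ZMod d) × (Fin n → ZMod d) spanned by {R(w_1), …, R(w_K)} and let B = R(S). Then there exists an abelian subgroup H of G_d^n with no nontrivial scalars whose fixed subspace Fix(H) equals Q if and only if Nat.card A = K * Nat.card (A ∩ B). -/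
open Matrix

/-- The subspace of states fixed by every matrix in `S`. -/
noncomputable def FixSubspace (d n : ℕ) [NeZero d]
    (S : Set (Matrix (Fin n → ZMod d) (Fin n → ZMod d) ℂ)) :
    Submodule ℂ ((Fin n → ZMod d) → ℂ) where
  carrier := {ψ | ∀ s ∈ S, s.mulVec ψ = ψ}
  add_mem' := by
    intro a b ha hb s hs
    simp [Matrix.mulVec_add, ha s hs, hb s hs]
  zero_mem' := by
    intro s hs
    simp [Matrix.mulVec_zero]
  smul_mem' := by
    intro c a ha s hs
    simp [Matrix.mulVec_smul, ha s hs]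

/-!
Commutation of Pauli matrices is governed by the symplectic form on their labels: `g * h` is
`h * g` times the character of the symplectic product of the labels. Since `|S| = d ^ n`, the
label set `B` is its own symplectic complement.

Let `H₀` be the subgroup of those elements of `S` that commute with every `w i`. It fixes all
`w i *ᵥ ψ`, so `Q ≤ Fix H₀`. If `Q = Fix H`, then every `h ∈ H` fixes `ψ = w 0 *ᵥ ψ` and every
`w i *ᵥ ψ`, which forces `h` to commute with `S` and with every `w i`; as `B` is self-orthogonal,
`h ∈ S`. Hence `H ⊆ H₀` and `Q = Fix H₀`. So `Q` is a stabilizer code iff `dim (Fix H₀) = K`.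

Averaging over `H₀` gives `|H₀| * dim (Fix H₀) = d ^ n`. Summing `χ (ω a b)` over `A × B` in both
orders, where `χ k = q ^ k` and `ω` is the symplectic form, gives
`|A| * |B ∩ A^⊥| = |B| * |A ∩ B^⊥|`, that is `|A| * |H₀| = d ^ n * |A ∩ B|`.
Together, `|A| = dim (Fix H₀) * |A ∩ B|`.
-/

open ZMod (stdAddChar)

namespace CWS

section Duality

variable {R M N k : Type*} [CommRing R] [AddCommGroup M] [Module R M] [AddCommGroup N] [Module R N]
  [CommRing k] [IsDomain k] {χ : AddChar R k}

lemma sum_addChar_comp_linearMap [Fintype M] (hχ : χ.IsPrimitive) (f : M →ₗ[R] R)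
    [Decidable (f = 0)] : ∑ m, χ (f m) = if f = 0 then (Fintype.card M : k) else 0 := by
  split_ifs with hf
  · simp [hf]
  · suffices χ.compAddMonoidHom f.toAddMonoidHom ≠ 1 by
      simpa using AddChar.sum_eq_zero_of_ne_one this
    contrapose hf
    ext m
    by_contra hm
    -- `χ` is trivial on the ideal `f.range`, hence on the ideal generated by `f m`.
    refine hχ hm (DFunLike.ext _ _ fun r => ?_)
    simpa [AddChar.mulShift_apply, mul_comm] using DFunLike.congr_fun hf (r • m)

lemma sum_sum_addChar_bilinear [Fintype M] [Fintype N] (hχ : χ.IsPrimitive)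
    (B : M →ₗ[R] N →ₗ[R] R) :
    ∑ m, ∑ n, χ (B m n) = ((Nat.card N * Nat.card (LinearMap.ker B) : ℕ) : k) := by
  classical
  simp_rw [sum_addChar_comp_linearMap hχ]
  rw [← Finset.sum_filter, Finset.sum_const, nsmul_eq_mul, Nat.card_eq_fintype_card,
    Nat.card_eq_fintype_card, Fintype.card_subtype]
  push_cast
  simp only [LinearMap.mem_ker, mul_comm]

theorem card_mul_card_ker_flip [CharZero k] [Finite M] [Finite N] (hχ : χ.IsPrimitive)
    (B : M →ₗ[R] N →ₗ[R] R) :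
    Nat.card M * Nat.card (LinearMap.ker B.flip) = Nat.card N * Nat.card (LinearMap.ker B) := by
  have := Fintype.ofFinite M
  have := Fintype.ofFinite N
  have h := sum_sum_addChar_bilinear hχ B.flip
  simp only [LinearMap.flip_apply] at h
  rw [Finset.sum_comm, sum_sum_addChar_bilinear hχ B] at h
  exact_mod_cast h.symm

lemma card_ker_domRestrict₁₂ (B : LinearMap.BilinForm R M) (p q : Submodule R M) :
    Nat.card (LinearMap.ker (B.domRestrict₁₂ p q)) =
      Nat.card (p ⊓ B.flip.orthogonal q : Submodule R M) := by
  have h : (LinearMap.ker (B.domRestrict₁₂ p q)).map p.subtype = p ⊓ B.flip.orthogonal q := by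
    ext x
    simp [LinearMap.ext_iff, LinearMap.BilinForm.mem_orthogonal_iff,
      LinearMap.domRestrict₁₂_apply, and_comm]
  rw [← h]
  exact (Nat.card_image_of_injective p.subtype_injective _).symm

theorem card_mul_card_inf_orthogonal [CharZero k] [Finite M] (hχ : χ.IsPrimitive)
    {B : LinearMap.BilinForm R M} (hB : B.IsRefl) (p q : Submodule R M) :
    Nat.card p * Nat.card (q ⊓ B.orthogonal p : Submodule R M) =
      Nat.card q * Nat.card (p ⊓ B.orthogonal q : Submodule R M) := by
  have hflip : B.flip.orthogonal q = B.orthogonal q := by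
    ext x
    exact forall₂_congr fun y _ => hB.eq_iff
  have h := card_mul_card_ker_flip hχ (B.domRestrict₁₂ p q)
  rwa [card_ker_domRestrict₁₂, hflip,
    show (B.domRestrict₁₂ p q).flip = B.flip.domRestrict₁₂ q p from rfl,
    card_ker_domRestrict₁₂] at h

theorem card_mul_card_orthogonal [CharZero k] [Finite M] (hχ : χ.IsPrimitive)
    {B : LinearMap.BilinForm R M} (hB : B.IsRefl) (hB' : B.Nondegenerate) (p : Submodule R M) :
    Nat.card p * Nat.card (B.orthogonal p) = Nat.card M := by
  have h := card_mul_card_inf_orthogonal hχ hB p ⊤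
  rw [B.orthogonal_top_eq_bot hB'] at h
  simpa using h

end Duality

section SymplecticForm

variable (R m : Type*) [CommRing R] [Fintype m]

/-- The standard symplectic form on `(m → R) × (m → R)`, which measures the failure of Pauli
matrices to commute. The sign is the one for which
`W(x) * W(y) = q ^ symplecticForm x y • W(y) * W(x)`. -/
def symplecticForm : LinearMap.BilinForm R ((m → R) × (m → R)) :=
  LinearMap.mk₂ R (fun x y => x.1 ⬝ᵥ y.2 - y.1 ⬝ᵥ x.2)
    (by intros; simp only [Prod.fst_add, Prod.snd_add, add_dotProduct, dotProduct_add]; ring)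
    (by intros; simp [mul_sub])
    (by intros; simp only [Prod.fst_add, Prod.snd_add, add_dotProduct, dotProduct_add]; ring)
    (by intros; simp [mul_sub])

variable {R m}

lemma symplecticForm_apply (x y : (m → R) × (m → R)) :
    symplecticForm R m x y = x.1 ⬝ᵥ y.2 - y.1 ⬝ᵥ x.2 := rfl

lemma symplecticForm_isAlt : (symplecticForm R m).IsAlt := fun x => by
  simp [symplecticForm_apply]

lemma symplecticForm_nondegenerate : (symplecticForm R m).Nondegenerate := by
  classical
  refine (LinearMap.IsRefl.nondegenerate_iff_separatingLeft
    fun x y => symplecticForm_isAlt.isRefl x y).2 fun x hx => ?_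
  ext i
  · simpa [symplecticForm_apply] using hx (0, Pi.single i 1)
  · simpa [symplecticForm_apply] using hx (Pi.single i 1, 0)

end SymplecticForm

variable {d n : ℕ}

/-- The labels `(U, V)` of Pauli words. -/
abbrev PhaseSpace (d n : ℕ) : Type := (Fin n → ZMod d) × (Fin n → ZMod d)

/-- The Pauli matrix `q ^ k • W(U, V)` with phase `k` and label `x = (U, V)`. -/
noncomputable def pauli (k : ZMod d) (x : PhaseSpace d n) :
    Matrix (Fin n → ZMod d) (Fin n → ZMod d) ℂ :=
  q d ^ k.val • PauliWord d n x.1 x.2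

lemma mem_pauliSet_iff {g : Matrix (Fin n → ZMod d) (Fin n → ZMod d) ℂ} :
    g ∈ PauliSet d n ↔ ∃ (k : ZMod d) (x : PhaseSpace d n), g = pauli k x := by
  simp [PauliSet, pauli]

variable [NeZero d]

lemma q_pow_val (k : ZMod d) : q d ^ k.val = stdAddChar k := by
  rw [q, ← Complex.exp_nat_mul, ZMod.stdAddChar_apply, ZMod.toCircle_apply]
  congr 1
  ring

lemma pauli_apply (k : ZMod d) (x : PhaseSpace d n) (I J : Fin n → ZMod d) :
    pauli k x I J = if I = J + x.2 then stdAddChar (k + x.1 ⬝ᵥ I) else 0 := by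
  simp [pauli, PauliWord, q_pow_val, AddChar.map_add_eq_mul, dotp, dotProduct]

lemma pauli_zero_zero : pauli 0 (0 : PhaseSpace d n) = 1 := by
  ext I J
  simp [pauli_apply, Matrix.one_apply]

lemma stdAddChar_smul_pauli (k l : ZMod d) (x : PhaseSpace d n) :
    stdAddChar k • pauli l x = pauli (k + l) x := by
  ext I J
  simp [pauli_apply, add_assoc, AddChar.map_add_eq_mul _ k]

lemma pauli_mul (k l : ZMod d) (x y : PhaseSpace d n) :
    pauli k x * pauli l y = pauli (k + l - y.1 ⬝ᵥ x.2) (x + y) := by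
  ext I J
  rw [Matrix.mul_apply,
    Finset.sum_eq_single (J + y.2) (by simp +contextual [pauli_apply]) (by simp)]
  have hiff : I = J + y.2 + x.2 ↔ I = J + (x + y).2 := by
    rw [Prod.snd_add, add_assoc, add_comm y.2]
  simp only [pauli_apply, if_true, hiff]
  split_ifs with hI
  · rw [← AddChar.map_add_eq_mul, hI]
    congr 1
    simp only [Prod.fst_add, Prod.snd_add, add_dotProduct, dotProduct_add]
    ring
  · simp

lemma pauli_injective2 : Function.Injective2 (pauli : ZMod d → PhaseSpace d n → _) := by
  intro k l x y h
  have hsnd : x.2 = y.2 := by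
    by_contra hne
    simpa [pauli_apply, hne, (AddChar.val_isUnit _ _).ne_zero] using congrFun₂ h x.2 0
  have hphase (I : Fin n → ZMod d) : k + x.1 ⬝ᵥ I = l + y.1 ⬝ᵥ I :=
    ZMod.injective_stdAddChar (by simpa [pauli_apply, hsnd] using congrFun₂ h I (I - x.2))
  have hkl : k = l := by simpa using hphase 0
  refine ⟨hkl, Prod.ext (funext fun i => ?_) hsnd⟩
  simpa [hkl] using hphase (Pi.single i 1)

lemma isUnit_pauli (k : ZMod d) (x : PhaseSpace d n) : IsUnit (pauli k x) := by
  refine IsUnit.of_mul_eq_one (pauli (-k - x.1 ⬝ᵥ x.2) (-x)) ?_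
  rw [pauli_mul, ← pauli_zero_zero]
  congr 1
  · simp only [Prod.fst_neg, neg_dotProduct]
    ring
  · simp

lemma pauli_mul_eq_smul (k l : ZMod d) (x y : PhaseSpace d n) :
    pauli k x * pauli l y = stdAddChar (symplecticForm _ _ x y) • (pauli l y * pauli k x) := by
  rw [pauli_mul, pauli_mul, stdAddChar_smul_pauli, add_comm y x, symplecticForm_apply]
  congr 1
  ring

lemma commute_pauli_iff {k l : ZMod d} {x y : PhaseSpace d n} :
    Commute (pauli k x) (pauli l y) ↔ symplecticForm _ _ x y = 0 := by
  refine ⟨fun h => ?_, fun h => ?_⟩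
  · have h' := h.eq
    rw [pauli_mul_eq_smul, pauli_mul, stdAddChar_smul_pauli] at h'
    simpa using (pauli_injective2 h').1
  · simp [Commute, SemiconjBy, pauli_mul_eq_smul k l x y, h]

lemma commute_of_mulVec_eq_self {g w : Matrix (Fin n → ZMod d) (Fin n → ZMod d) ℂ}
    (hg : g ∈ PauliSet d n) (hw : w ∈ PauliSet d n) {ψ : (Fin n → ZMod d) → ℂ} (hψ : ψ ≠ 0)
    (hgψ : g *ᵥ ψ = ψ) (hgwψ : g *ᵥ w *ᵥ ψ = w *ᵥ ψ) : Commute g w := by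
  obtain ⟨k, x, rfl⟩ := mem_pauliSet_iff.1 hg
  obtain ⟨l, y, rfl⟩ := mem_pauliSet_iff.1 hw
  have hne : pauli l y *ᵥ ψ ≠ 0 := fun h =>
    hψ (Matrix.mulVec_injective_of_isUnit (isUnit_pauli l y) (by simpa using h))
  have hphase : stdAddChar (symplecticForm _ _ x y) • pauli l y *ᵥ ψ = pauli l y *ᵥ ψ := by
    rwa [Matrix.mulVec_mulVec, pauli_mul_eq_smul, Matrix.smul_mulVec, ← Matrix.mulVec_mulVec,
      hgψ] at hgwψ
  have hone : stdAddChar (symplecticForm _ _ x y) = 1 :=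
    smul_left_injective ℂ hne (by simpa using hphase)
  rw [Commute, SemiconjBy, pauli_mul_eq_smul, hone, one_smul]

lemma trace_pauli (k : ZMod d) (x : PhaseSpace d n) :
    (pauli k x).trace = if x = 0 then stdAddChar k * (d : ℂ) ^ n else 0 := by
  classical
  by_cases hx : x.2 = 0
  · have hiff : dotProductBilin (ZMod d) (ZMod d) x.1 = 0 ↔ x = 0 := by
      simp [LinearMap.ext_iff, Prod.ext_iff, hx, dotProduct_eq_zero_iff]
    have hsum := sum_addChar_comp_linearMap (ZMod.isPrimitive_stdAddChar d)
      (dotProductBilin (ZMod d) (ZMod d) x.1)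
    simp only [hiff, dotProductBilin_apply_apply] at hsum
    simp [Matrix.trace, pauli_apply, hx, AddChar.map_add_eq_mul, ← Finset.mul_sum, hsum]
  · have hx0 : x ≠ 0 := fun h => hx (by simp [h])
    simp [Matrix.trace, pauli_apply, hx, hx0]

/-- An abelian subgroup of the Pauli group `G_d^n` without nontrivial scalars, presented as a set
of matrices. -/
structure IsStabilizerGroup (S : Set (Matrix (Fin n → ZMod d) (Fin n → ZMod d) ℂ)) : Prop where
  subset_pauliSet : S ⊆ PauliSet d n
  one_mem : 1 ∈ S
  mul_mem : ∀ a ∈ S, ∀ b ∈ S, a * b ∈ S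
  exists_mul_eq_one : ∀ a ∈ S, ∃ b ∈ S, a * b = 1
  comm : ∀ a ∈ S, ∀ b ∈ S, a * b = b * a
  smul_one_eq_one : ∀ c : ℂ, c • (1 : Matrix (Fin n → ZMod d) (Fin n → ZMod d) ℂ) ∈ S →
    c • (1 : Matrix (Fin n → ZMod d) (Fin n → ZMod d) ℂ) = 1

lemma isStabilizerGroup_iff {S : Set (Matrix (Fin n → ZMod d) (Fin n → ZMod d) ℂ)} :
    IsStabilizerGroup S ↔ S ⊆ PauliSet d n ∧ 1 ∈ S ∧ (∀ a ∈ S, ∀ b ∈ S, a * b ∈ S) ∧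
      (∀ a ∈ S, ∃ b ∈ S, a * b = 1) ∧ (∀ a ∈ S, ∀ b ∈ S, a * b = b * a) ∧
      ∀ c : ℂ, c • (1 : Matrix (Fin n → ZMod d) (Fin n → ZMod d) ℂ) ∈ S →
        c • (1 : Matrix (Fin n → ZMod d) (Fin n → ZMod d) ℂ) = 1 :=
  ⟨fun ⟨h₁, h₂, h₃, h₄, h₅, h₆⟩ => ⟨h₁, h₂, h₃, h₄, h₅, h₆⟩,
    fun ⟨h₁, h₂, h₃, h₄, h₅, h₆⟩ => ⟨h₁, h₂, h₃, h₄, h₅, h₆⟩⟩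

lemma fixSubspace_anti {S T : Set (Matrix (Fin n → ZMod d) (Fin n → ZMod d) ℂ)} (h : S ⊆ T) :
    FixSubspace d n T ≤ FixSubspace d n S :=
  fun _ hψ s hs => hψ s (h hs)

lemma span_mulVec_le_fixSubspace {ι : Type*}
    {S : Set (Matrix (Fin n → ZMod d) (Fin n → ZMod d) ℂ)} {ψ : (Fin n → ZMod d) → ℂ}
    (hψS : ψ ∈ FixSubspace d n S) (w : ι → Matrix (Fin n → ZMod d) (Fin n → ZMod d) ℂ) :
    Submodule.span ℂ (Set.range fun i => w i *ᵥ ψ) ≤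
      FixSubspace d n (S ∩ (Set.range w).centralizer) := by
  rw [Submodule.span_le]
  rintro _ ⟨i, rfl⟩ s ⟨hs, hsw⟩
  rw [Matrix.mulVec_mulVec, ← hsw _ ⟨i, rfl⟩, ← Matrix.mulVec_mulVec, hψS s hs]

namespace IsStabilizerGroup

variable {S H : Set (Matrix (Fin n → ZMod d) (Fin n → ZMod d) ℂ)} {ψ : (Fin n → ZMod d) → ℂ}

/-- The set `R(S)` of labels of the elements of a stabilizer group. -/
def labels (hS : IsStabilizerGroup S) : Submodule (ZMod d) (PhaseSpace d n) :=
  AddSubgroup.toZModSubmodule d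
    { carrier := {x | ∃ k, pauli k x ∈ S}
      zero_mem' := ⟨0, pauli_zero_zero (d := d) (n := n) ▸ hS.one_mem⟩
      add_mem' := by
        rintro x y ⟨k, hk⟩ ⟨l, hl⟩
        exact ⟨_, pauli_mul k l x y ▸ hS.mul_mem _ hk _ hl⟩
      neg_mem' := by
        rintro x ⟨k, hk⟩
        obtain ⟨b, hb, hab⟩ := hS.exists_mul_eq_one _ hk
        obtain ⟨l, y, rfl⟩ := mem_pauliSet_iff.1 (hS.subset_pauliSet hb)
        rw [pauli_mul, ← pauli_zero_zero] at hab
        exact ⟨l, neg_eq_of_add_eq_zero_right (pauli_injective2 hab).2 ▸ hb⟩ }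

lemma image_eq_labels (hS : IsStabilizerGroup S)
    {R : Matrix (Fin n → ZMod d) (Fin n → ZMod d) ℂ → PhaseSpace d n}
    (hR : ∀ k x, R (pauli k x) = x) : R '' S = hS.labels := by
  ext x
  refine ⟨?_, fun ⟨k, hk⟩ => ⟨_, hk, hR k x⟩⟩
  rintro ⟨s, hs, rfl⟩
  obtain ⟨k, y, rfl⟩ := mem_pauliSet_iff.1 (hS.subset_pauliSet hs)
  exact ⟨k, (hR k y).symm ▸ hs⟩

lemma phase_eq_zero (hS : IsStabilizerGroup S) {k : ZMod d}
    (hk : pauli k (0 : PhaseSpace d n) ∈ S) : k = 0 := by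
  have hsmul : pauli k (0 : PhaseSpace d n) = stdAddChar k • 1 := by
    rw [← pauli_zero_zero, stdAddChar_smul_pauli, add_zero]
  rw [hsmul] at hk
  have h := hS.smul_one_eq_one _ hk
  rw [← hsmul, ← pauli_zero_zero] at h
  exact (pauli_injective2 h).1

lemma phase_unique (hS : IsStabilizerGroup S) {k l : ZMod d} {x : PhaseSpace d n}
    (hk : pauli k x ∈ S) (hl : pauli l x ∈ S) : k = l := by
  obtain ⟨b, hb, hlb⟩ := hS.exists_mul_eq_one _ hl
  refine sub_eq_zero.1 (hS.phase_eq_zero ?_)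
  have h : pauli (k - l) 0 = pauli k x * b := by
    rw [← add_zero (k - l), ← stdAddChar_smul_pauli, pauli_zero_zero, ← hlb, ← Matrix.smul_mul,
      stdAddChar_smul_pauli, sub_add_cancel]
  exact h ▸ hS.mul_mem _ hk _ hb

lemma card_labels (hS : IsStabilizerGroup S) : Nat.card hS.labels = Nat.card S := by
  choose phase hphase using fun x : hS.labels => x.2
  refine Nat.card_congr (Equiv.ofBijective (fun x => ⟨pauli (phase x) x, hphase x⟩) ⟨?_, ?_⟩)
  · exact fun x y hxy => Subtype.ext (pauli_injective2 (Subtype.ext_iff.1 hxy)).2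
  · rintro ⟨s, hs⟩
    obtain ⟨k, x, rfl⟩ := mem_pauliSet_iff.1 (hS.subset_pauliSet hs)
    exact ⟨⟨x, k, hs⟩, Subtype.ext (congrArg (pauli · x) (hS.phase_unique (hphase _) hs))⟩

lemma finite (hS : IsStabilizerGroup S) : S.Finite := by
  refine (Set.finite_range fun p : ZMod d × PhaseSpace d n => pauli p.1 p.2).subset fun s hs => ?_
  obtain ⟨k, x, rfl⟩ := mem_pauliSet_iff.1 (hS.subset_pauliSet hs)
  exact ⟨(k, x), rfl⟩

lemma trace_eq_zero (hS : IsStabilizerGroup S) {s : Matrix (Fin n → ZMod d) (Fin n → ZMod d) ℂ}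
    (hs : s ∈ S) (hne : s ≠ 1) : s.trace = 0 := by
  obtain ⟨k, x, rfl⟩ := mem_pauliSet_iff.1 (hS.subset_pauliSet hs)
  rw [trace_pauli, if_neg]
  rintro rfl
  exact hne (hS.phase_eq_zero hs ▸ pauli_zero_zero)

/-- A stabilizer group as a subgroup of the group of invertible matrices, for use with the
representation theory of finite groups. -/
def toSubgroup (hS : IsStabilizerGroup S) :
    Subgroup (Matrix (Fin n → ZMod d) (Fin n → ZMod d) ℂ)ˣ where
  carrier := Units.val ⁻¹' S
  one_mem' := hS.one_mem
  mul_mem' ha hb := hS.mul_mem _ ha _ hb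
  inv_mem' {u} hu := by
    obtain ⟨b, hb, hub⟩ := hS.exists_mul_eq_one u hu
    rwa [Set.mem_preimage, Units.inv_eq_of_mul_eq_one_right hub]

lemma val_image_toSubgroup (hS : IsStabilizerGroup S) : Units.val '' hS.toSubgroup = S := by
  refine Set.image_preimage_eq_of_subset fun s hs => ?_
  obtain ⟨b, -, hsb⟩ := hS.exists_mul_eq_one s hs
  exact ⟨⟨s, b, hsb, mul_eq_one_comm.1 hsb⟩, rfl⟩

/-- The defining representation of a stabilizer group on state vectors. -/
def representation (hS : IsStabilizerGroup S) :
    Representation ℂ hS.toSubgroup ((Fin n → ZMod d) → ℂ) :=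
  (Matrix.toLinAlgEquiv' : Matrix (Fin n → ZMod d) (Fin n → ZMod d) ℂ ≃ₐ[ℂ] _).toMonoidHom.comp
    ((Units.coeHom _).comp hS.toSubgroup.subtype)

lemma invariants_representation (hS : IsStabilizerGroup S) :
    hS.representation.invariants = FixSubspace d n S := by
  ext ψ
  have h : ψ ∈ FixSubspace d n S ↔ ∀ s ∈ Units.val '' (hS.toSubgroup : Set _), s *ᵥ ψ = ψ := by
    rw [hS.val_image_toSubgroup]
    rfl
  rw [h, Set.forall_mem_image, Representation.mem_invariants]
  exact Subtype.forall

lemma character_representation (hS : IsStabilizerGroup S) [DecidableEq hS.toSubgroup]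
    (g : hS.toSubgroup) :
    hS.representation.character g = if g = 1 then (d : ℂ) ^ n else 0 := by
  split_ifs with hg
  · simp [hg]
  · exact (Matrix.trace_toLin'_eq g.1.1).trans
      (hS.trace_eq_zero g.2 fun h => hg (Subtype.ext (Units.ext h)))

theorem card_mul_finrank_fixSubspace (hS : IsStabilizerGroup S) :
    Nat.card S * Module.finrank ℂ (FixSubspace d n S) = d ^ n := by
  classical
  have hcard : Nat.card hS.toSubgroup = Nat.card S := by
    conv_rhs => rw [← hS.val_image_toSubgroup]
    exact (Nat.card_image_of_injective Units.val_injective _).symm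
  have : Finite hS.toSubgroup := (hS.finite.preimage Units.val_injective.injOn).to_subtype
  have := Fintype.ofFinite hS.toSubgroup
  have hne : (Nat.card hS.toSubgroup : ℂ) ≠ 0 := Nat.cast_ne_zero.2 Nat.card_pos.ne'
  have := invertibleOfNonzero hne
  have h := hS.representation.card_inv_mul_sum_char_eq_finrank
  simp only [character_representation, Finset.sum_ite_eq', Finset.mem_univ, if_true] at h
  rw [inv_mul_eq_iff_eq_mul₀ hne, hcard, invariants_representation] at h
  exact_mod_cast h.symm

lemma labels_le_orthogonal (hS : IsStabilizerGroup S) :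
    hS.labels ≤ (symplecticForm _ _).orthogonal hS.labels := by
  rintro x ⟨k, hk⟩ y ⟨l, hl⟩
  exact commute_pauli_iff.1 (hS.comm _ hl _ hk)

theorem orthogonal_labels (hS : IsStabilizerGroup S) (hcard : Nat.card S = d ^ n) :
    (symplecticForm _ _).orthogonal hS.labels = hS.labels := by
  have h := card_mul_card_orthogonal (ZMod.isPrimitive_stdAddChar d)
    symplecticForm_isAlt.isRefl symplecticForm_nondegenerate hS.labels
  rw [hS.card_labels, hcard, Nat.card_prod, Nat.card_fun, Nat.card_zmod, Nat.card_fin] at h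
  have hle : Nat.card ((symplecticForm _ _).orthogonal hS.labels) ≤ Nat.card hS.labels := by
    rw [hS.card_labels, hcard]
    exact (Nat.eq_of_mul_eq_mul_left (pow_pos (NeZero.pos d) n) h).le
  exact (SetLike.coe_injective
    (Set.eq_of_subset_of_ncard_le hS.labels_le_orthogonal hle)).symm

theorem mem_of_commute (hS : IsStabilizerGroup S) (hcard : Nat.card S = d ^ n)
    (hψS : ψ ∈ FixSubspace d n S) (hψ : ψ ≠ 0)
    {g : Matrix (Fin n → ZMod d) (Fin n → ZMod d) ℂ} (hg : g ∈ PauliSet d n)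
    (hcomm : ∀ s ∈ S, Commute g s) (hgψ : g *ᵥ ψ = ψ) : g ∈ S := by
  obtain ⟨k, x, rfl⟩ := mem_pauliSet_iff.1 hg
  have hx : x ∈ (symplecticForm _ _).orthogonal hS.labels := by
    rintro y ⟨l, hl⟩
    exact commute_pauli_iff.1 (hcomm _ hl).symm
  rw [hS.orthogonal_labels hcard] at hx
  obtain ⟨l, hl⟩ := hx
  have hphase : stdAddChar (k - l) • ψ = ψ := by
    conv_lhs => rw [← hψS _ hl]
    rw [← Matrix.smul_mulVec, stdAddChar_smul_pauli, sub_add_cancel, hgψ]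
  have hone : stdAddChar (k - l) = 1 := smul_left_injective ℂ hψ (by simpa using hphase)
  have hkl : k - l = 0 := ZMod.injective_stdAddChar (by simpa using hone)
  rwa [sub_eq_zero.1 hkl]

section Centralizer

variable {ι : Type*} {w : ι → Matrix (Fin n → ZMod d) (Fin n → ZMod d) ℂ}

lemma inter_centralizer (hS : IsStabilizerGroup S)
    (T : Set (Matrix (Fin n → ZMod d) (Fin n → ZMod d) ℂ)) :
    IsStabilizerGroup (S ∩ T.centralizer) where
  subset_pauliSet := Set.inter_subset_left.trans hS.subset_pauliSet
  one_mem := ⟨hS.one_mem, Set.one_mem_centralizer⟩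
  mul_mem a ha b hb := ⟨hS.mul_mem a ha.1 b hb.1, Set.mul_mem_centralizer ha.2 hb.2⟩
  exists_mul_eq_one a ha := by
    obtain ⟨b, hb, hab⟩ := hS.exists_mul_eq_one a ha.1
    let u : (Matrix (Fin n → ZMod d) (Fin n → ZMod d) ℂ)ˣ :=
      ⟨a, b, hab, mul_eq_one_comm.1 hab⟩
    exact ⟨b, ⟨hb, fun t ht => Commute.units_inv_right (u := u) (ha.2 t ht)⟩, hab⟩
  comm a ha b hb := hS.comm a ha.1 b hb.1
  smul_one_eq_one c hc := hS.smul_one_eq_one c hc.1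

lemma labels_inter_centralizer (hS : IsStabilizerGroup S) {x : ι → PhaseSpace d n}
    (hw : ∀ i, ∃ k, w i = pauli k (x i)) :
    (hS.inter_centralizer (Set.range w)).labels = hS.labels ⊓
      (symplecticForm _ _).orthogonal (Submodule.span (ZMod d) (Set.range x)) := by
  choose l hl using hw
  ext y
  refine ⟨fun ⟨k, hk, hkw⟩ => ⟨⟨k, hk⟩, ?_⟩, fun ⟨⟨k, hk⟩, hy⟩ => ⟨k, hk, ?_⟩⟩
  · intro z hz
    induction hz using Submodule.span_induction with
    | mem z hz =>
      obtain ⟨i, rfl⟩ := hz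
      exact commute_pauli_iff.1 (hl i ▸ hkw (w i) ⟨i, rfl⟩ : Commute (pauli (l i) (x i)) _)
    | zero => simp
    | add z z' _ _ hz hz' => simp [hz, hz']
    | smul c z _ hz => simp [hz]
  · rintro _ ⟨i, rfl⟩
    rw [hl i]
    exact commute_pauli_iff.2 (hy (x i) (Submodule.subset_span ⟨i, rfl⟩))

theorem finrank_fixSubspace_mul_card (hS : IsStabilizerGroup S) (hcard : Nat.card S = d ^ n)
    {x : ι → PhaseSpace d n} (hw : ∀ i, ∃ k, w i = pauli k (x i)) :
    Module.finrank ℂ (FixSubspace d n (S ∩ (Set.range w).centralizer)) *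
        Nat.card (Submodule.span (ZMod d) (Set.range x) ⊓ hS.labels : Submodule _ _) =
      Nat.card (Submodule.span (ZMod d) (Set.range x)) := by
  set A := Submodule.span (ZMod d) (Set.range x)
  have hH := hS.inter_centralizer (Set.range w)
  have hfix := hH.card_mul_finrank_fixSubspace
  have hpos : 0 < Nat.card ↥(S ∩ (Set.range w).centralizer) :=
    Nat.pos_of_mul_pos_right (hfix ▸ pow_pos (NeZero.pos d) n)
  have hdual := card_mul_card_inf_orthogonal (ZMod.isPrimitive_stdAddChar d)
    (symplecticForm_isAlt (R := ZMod d) (m := Fin n)).isRefl A hS.labels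
  rw [← hS.labels_inter_centralizer hw, hH.card_labels, hS.orthogonal_labels hcard,
    hS.card_labels, hcard, ← hfix] at hdual
  refine Nat.eq_of_mul_eq_mul_left hpos ?_
  rw [← mul_assoc, ← hdual, mul_comm (Nat.card A)]

theorem subset_inter_centralizer (hS : IsStabilizerGroup S) (hcard : Nat.card S = d ^ n)
    (hψS : ψ ∈ FixSubspace d n S) (hψ : ψ ≠ 0) (hw : ∀ i, w i ∈ PauliSet d n)
    (hH : H ⊆ PauliSet d n) (hψH : ψ ∈ FixSubspace d n H)
    (hwH : ∀ i, w i *ᵥ ψ ∈ FixSubspace d n H) :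
    H ⊆ S ∩ (Set.range w).centralizer := by
  intro h hh
  refine ⟨hS.mem_of_commute hcard hψS hψ (hH hh) (fun s hs => ?_) (hψH h hh), ?_⟩
  · refine commute_of_mulVec_eq_self (hH hh) (hS.subset_pauliSet hs) hψ (hψH h hh) ?_
    rw [hψS s hs, hψH h hh]
  · rintro _ ⟨i, rfl⟩
    exact (commute_of_mulVec_eq_self (hH hh) (hw i) hψ (hψH h hh) (hwH i h hh)).symm

theorem exists_fixSubspace_eq_span_iff (hS : IsStabilizerGroup S) (hcard : Nat.card S = d ^ n)
    (hψS : ψ ∈ FixSubspace d n S) (hψ : ψ ≠ 0) (hw : ∀ i, w i ∈ PauliSet d n)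
    (hone : ∃ i, w i = 1) :
    (∃ H, IsStabilizerGroup H ∧
        FixSubspace d n H = Submodule.span ℂ (Set.range fun i => w i *ᵥ ψ)) ↔
      FixSubspace d n (S ∩ (Set.range w).centralizer) =
        Submodule.span ℂ (Set.range fun i => w i *ᵥ ψ) := by
  refine ⟨?_, fun h => ⟨_, hS.inter_centralizer _, h⟩⟩
  rintro ⟨H, hH, hfix⟩
  have hwH (i) : w i *ᵥ ψ ∈ FixSubspace d n H := hfix ▸ Submodule.subset_span ⟨i, rfl⟩
  have hψH : ψ ∈ FixSubspace d n H := by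
    obtain ⟨i, hi⟩ := hone
    simpa [hi] using hwH i
  have hsub := hS.subset_inter_centralizer hcard hψS hψ hw hH.subset_pauliSet hψH hwH
  exact ((fixSubspace_anti hsub).trans hfix.le).antisymm (span_mulVec_le_fixSubspace hψS w)

end Centralizer

end IsStabilizerGroup

end CWS

theorem cws_is_stabilizer_iff (d n K : ℕ) [NeZero d] (hd : 2 ≤ d) (hn : 1 ≤ n)
    (Rmap : Matrix (Fin n → ZMod d) (Fin n → ZMod d) ℂ →
      (Fin n → ZMod d) × (Fin n → ZMod d))
    (hR : ∀ (k : ZMod d) (U V : Fin n → ZMod d),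
      Rmap (q d ^ k.val • PauliWord d n U V) = (U, V))
    (S : Set (Matrix (Fin n → ZMod d) (Fin n → ZMod d) ℂ))
    (hSsub : S ⊆ PauliSet d n)
    (hS1 : (1 : Matrix (Fin n → ZMod d) (Fin n → ZMod d) ℂ) ∈ S)
    (hSmul : ∀ a ∈ S, ∀ b ∈ S, a * b ∈ S)
    (hSinv : ∀ a ∈ S, ∃ b ∈ S, a * b = 1)
    (hScomm : ∀ a ∈ S, ∀ b ∈ S, a * b = b * a)
    (hSscal : ∀ c : ℂ, c • (1 : Matrix (Fin n → ZMod d) (Fin n → ZMod d) ℂ) ∈ S →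
      c • (1 : Matrix (Fin n → ZMod d) (Fin n → ZMod d) ℂ) = 1)
    (hcard : Nat.card S = d ^ n)
    (ψ : (Fin n → ZMod d) → ℂ) (hψS : ψ ∈ FixSubspace d n S) (hψ : ψ ≠ 0)
    (hK : 0 < K)
    (w : Fin K → Matrix (Fin n → ZMod d) (Fin n → ZMod d) ℂ)
    (hw : ∀ i, w i ∈ PauliSet d n)
    (hw1 : w ⟨0, hK⟩ = 1)
    (hli : LinearIndependent ℂ (fun i => (w i).mulVec ψ)) :
    (∃ H : Set (Matrix (Fin n → ZMod d) (Fin n → ZMod d) ℂ),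
        H ⊆ PauliSet d n ∧
        (1 : Matrix (Fin n → ZMod d) (Fin n → ZMod d) ℂ) ∈ H ∧
        (∀ a ∈ H, ∀ b ∈ H, a * b ∈ H) ∧
        (∀ a ∈ H, ∃ b ∈ H, a * b = 1) ∧
        (∀ a ∈ H, ∀ b ∈ H, a * b = b * a) ∧
        (∀ c : ℂ, c • (1 : Matrix (Fin n → ZMod d) (Fin n → ZMod d) ℂ) ∈ H →
          c • (1 : Matrix (Fin n → ZMod d) (Fin n → ZMod d) ℂ) = 1) ∧
        FixSubspace d n H = Submodule.span ℂ (Set.range fun i => (w i).mulVec ψ)) ↔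
      Nat.card (Submodule.span (ZMod d) (Set.range fun i => Rmap (w i))) =
        K * Nat.card
          (((Submodule.span (ZMod d) (Set.range fun i => Rmap (w i)) :
              Set ((Fin n → ZMod d) × (Fin n → ZMod d)))) ∩ (Rmap '' S) :
            Set ((Fin n → ZMod d) × (Fin n → ZMod d))) := by
  have hS : CWS.IsStabilizerGroup S := ⟨hSsub, hS1, hSmul, hSinv, hScomm, hSscal⟩
  have hRpauli (k x) : Rmap (CWS.pauli k x) = x := hR k x.1 x.2
  have hlabel (i) : ∃ k, w i = CWS.pauli k (Rmap (w i)) := by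
    obtain ⟨k, x, hkx⟩ := CWS.mem_pauliSet_iff.1 (hw i)
    exact ⟨k, by rw [hkx, hRpauli]⟩
  have hdim := hS.finrank_fixSubspace_mul_card hcard hlabel
  have hQ : Module.finrank ℂ (Submodule.span ℂ (Set.range fun i => w i *ᵥ ψ)) = K := by
    rw [finrank_span_eq_card hli, Fintype.card_fin]
  have hexists := hS.exists_fixSubspace_eq_span_iff hcard hψS hψ hw ⟨_, hw1⟩
  simp only [CWS.isStabilizerGroup_iff, and_assoc] at hexists
  rw [hexists, hS.image_eq_labels hRpauli, ← Submodule.coe_inf, ← hdim]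
  refine ⟨fun hfix => by rw [hfix, hQ]; rfl, fun hcardA => ?_⟩
  exact (Submodule.eq_of_le_of_finrank_eq (CWS.span_mulVec_le_fixSubspace hψS w)
    (hQ.trans (Nat.eq_of_mul_eq_mul_right Nat.card_pos hcardA).symm)).symm
end
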